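/- For all integers k ≥ 1 and ℓ ≥ 1, (2/√(4k+2)) · ∑_{m=0}^{4k+1} χ_k(m) · sin(2πmℓ/(4k+2)) = (8/√(4k+2)) · sin(πℓ/2) · cos(πℓ/(2(2k+1))). -/

import Mathlib

/-- The odd periodic function `χ_k` of period `4k+2` with `χ_k(n) = 1` for
`n ≡ k, k+1 (mod 4k+2)`, `χ_k(n) = −1` for `n ≡ −k, −k−1 (mod 4k+2)`, and `0` otherwise. -/
noncomputable def chiK (k : ℕ) (n : ℤ) : ℝ :=
  if n % (4 * k + 2) = (k : ℤ) % (4 * k + 2) ∨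
      n % (4 * k + 2) = ((k : ℤ) + 1) % (4 * k + 2) then 1
  else if n % (4 * k + 2) = (-(k : ℤ)) % (4 * k + 2) ∨
      n % (4 * k + 2) = (-(k : ℤ) - 1) % (4 * k + 2) then -1
  else 0

theorem chiK_eq (k m : ℕ) (hk : 1 ≤ k) (hm : m < 4 * k + 2) :
    chiK k m = (if m = k then 1 else 0) + (if m = k + 1 then 1 else 0)
      - (if m = 3 * k + 2 then 1 else 0) - (if m = 3 * k + 1 then 1 else 0) := by
  have h0 : (m : ℤ) % (4 * k + 2) = m := Int.emod_eq_of_lt (by omega) (by omega)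
  have h1 : (k : ℤ) % (4 * k + 2) = k := Int.emod_eq_of_lt (by omega) (by omega)
  have h2 : ((k : ℤ) + 1) % (4 * k + 2) = k + 1 := Int.emod_eq_of_lt (by omega) (by omega)
  have h3 : (-(k : ℤ)) % (4 * k + 2) = 3 * k + 2 := by
    rw [← Int.add_emod_right]
    rw [Int.emod_eq_of_lt (by omega) (by omega)]; ring
  have h4 : (-(k : ℤ) - 1) % (4 * k + 2) = 3 * k + 1 := by
    rw [← Int.add_emod_right]
    rw [Int.emod_eq_of_lt (by omega) (by omega)]; ring
  unfold chiK
  rw [h0, h1, h2, h3, h4]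
  split_ifs <;> first | (exfalso; omega) | norm_num

/-- `G_{χ_k}^{(0)}(ℓ) = (8/√(4k+2)) sin(πℓ/2) cos(πℓ/(2(2k+1)))` for all
`k ≥ 1` and `ℓ ≥ 1`. -/
theorem G_chiK (k ℓ : ℕ) (hk : 1 ≤ k) (hℓ : 1 ≤ ℓ) :
    (2 / Real.sqrt (4 * k + 2)) *
        ∑ m ∈ Finset.range (4 * k + 2),
          chiK k m * Real.sin (2 * Real.pi * m * ℓ / (4 * k + 2))
      = (8 / Real.sqrt (4 * k + 2)) * Real.sin (Real.pi * ℓ / 2) *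
          Real.cos (Real.pi * ℓ / (2 * (2 * k + 1))) := by
  have hs : ∑ m ∈ Finset.range (4 * k + 2),
      chiK k m * Real.sin (2 * Real.pi * m * ℓ / (4 * k + 2))
      = 4 * Real.sin (Real.pi * ℓ / 2) * Real.cos (Real.pi * ℓ / (2 * (2 * k + 1))) := by
    rw [Finset.sum_congr rfl (fun m hm => by
      rw [chiK_eq k m hk (Finset.mem_range.mp hm)])]
    simp only [sub_mul, add_mul, ite_mul, one_mul, zero_mul, Finset.sum_sub_distrib,
      Finset.sum_add_distrib, Finset.sum_ite_eq', Finset.mem_range]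
    rw [if_pos (by omega), if_pos (by omega), if_pos (by omega), if_pos (by omega)]
    push_cast
    have hd : (2 * (k : ℝ) + 1) ≠ 0 := by positivity
    have hd' : (4 * (k : ℝ) + 2) ≠ 0 := by positivity
    set x := Real.pi * ℓ / 2 with hx
    set y := Real.pi * ℓ / (2 * (2 * (k : ℝ) + 1)) with hy
    have e1 : 2 * Real.pi * k * ℓ / (4 * k + 2) = x - y := by
      rw [hx, hy]; field_simp; ring
    have e2 : 2 * Real.pi * (k + 1) * ℓ / (4 * k + 2) = x + y := by
      rw [hx, hy]; field_simp; ring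
    have e3 : 2 * Real.pi * (3 * k + 2) * ℓ / (4 * k + 2) = ℓ * (2 * Real.pi) - (x - y) := by
      rw [hx, hy]; field_simp; ring
    have e4 : 2 * Real.pi * (3 * k + 1) * ℓ / (4 * k + 2) = ℓ * (2 * Real.pi) - (x + y) := by
      rw [hx, hy]; field_simp; ring
    rw [e1, e2, e3, e4, Real.sin_nat_mul_two_pi_sub, Real.sin_nat_mul_two_pi_sub,
      Real.sin_add, Real.sin_sub]
    ring
  rw [hs]; ring
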